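/- arXiv:1008.4210 — 9 statements merged into one kernel-verified Lean document; each statement's English description precedes it below -/
import Mathlib

section
/- Let G be a connected interval graph with a fixed interval representation, and let V_1, …, V_l be the cliques determined by the points y_1, …, y_l. Then every minimal cut-set X of G is equal to V_i for some index i with 1 ≤ i ≤ l. -/
theorem card_helper {V : Type*} [Fintype V] (G : SimpleGraph V) (hconn : G.Connected) (X : Set V) :
    Nat.card G.ConnectedComponent < Nat.card (G.induce Xᶜ).ConnectedComponent ↔
      ∃ p q : (Xᶜ : Set V), ¬ (G.induce Xᶜ).Reachable p q := by
  have h1 : Nat.card G.ConnectedComponent = 1 := by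
    have := hconn.nonempty
    have := hconn.preconnected.subsingleton_connectedComponent
    have : Nonempty G.ConnectedComponent := ⟨G.connectedComponentMk (Classical.arbitrary V)⟩
    exact Nat.card_eq_one_iff_unique.2 ⟨inferInstance, inferInstance⟩
  have : Finite (G.induce Xᶜ).ConnectedComponent :=
    Finite.of_surjective (G.induce Xᶜ).connectedComponentMk Quot.mk_surjective
  rw [h1, Finite.one_lt_card_iff_nontrivial]
  constructor
  · rintro ⟨c, d, h⟩
    induction c using SimpleGraph.ConnectedComponent.ind with | _ p
    induction d using SimpleGraph.ConnectedComponent.ind with | _ q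
    exact ⟨p, q, fun hr => h (SimpleGraph.ConnectedComponent.eq.2 hr)⟩
  · rintro ⟨p, q, h⟩
    exact ⟨_, _, fun he => h (SimpleGraph.ConnectedComponent.eq.1 he)⟩

theorem reach_ind {W : Type*} (H : SimpleGraph W) (P : W → Prop) {p v : W} (hr : H.Reachable p v)
    (hp : P p) (hs : ∀ u w, H.Reachable p u → H.Adj u w → P u → P w) : P v := by
  have hr' := (SimpleGraph.reachable_iff_reflTransGen p v).1 hr
  induction hr' with
  | refl => exact hp
  | tail h1 h2 ih =>
    have h3 := (SimpleGraph.reachable_iff_reflTransGen _ _).2 h1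
    exact hs _ _ h3 h2 (ih h3)

/-- In a connected interval graph with a fixed interval representation,
every minimal cut-set equals one of the cliques `Vset i` determined by the points `y i`. -/
theorem stmt_0
    {V : Type*} [Fintype V] (G : SimpleGraph V)
    (a b : V → ℝ) (hab : ∀ v, a v < b v)
    (hadj : ∀ u v : V, G.Adj u v ↔
      u ≠ v ∧ (Set.Icc (a u) (b u) ∩ Set.Icc (a v) (b v)).Nonempty)
    (hconn : G.Connected)
    (l : ℕ) (x : Fin (l + 1) → ℝ) (hx : StrictMono x)
    (hxrange : Set.range x = Set.range a ∪ Set.range b)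
    (y : Fin l → ℝ)
    (hy : ∀ i : Fin l, x i.castSucc < y i ∧ y i < x i.succ)
    (Vset : Fin l → Set V)
    (hVset : ∀ i v, v ∈ Vset i ↔ y i ∈ Set.Icc (a v) (b v))
    (X : Set V)
    (hcut : Nat.card G.ConnectedComponent <
      Nat.card (G.induce Xᶜ).ConnectedComponent)
    (hmin : ∀ X' : Set V, X' ⊂ X →
      ¬ (Nat.card G.ConnectedComponent <
        Nat.card (G.induce X'ᶜ).ConnectedComponent)) :
    ∃ i : Fin l, X = Vset i := by
  rw [card_helper G hconn] at hcut
  have hadj' : ∀ u v : V, G.Adj u v ↔ u ≠ v ∧ a u ≤ b v ∧ a v ≤ b u := by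
    intro u v
    rw [hadj]
    refine and_congr_right fun _ => ⟨?_, ?_⟩
    · rintro ⟨z, ⟨h1, h2⟩, h3, h4⟩
      exact ⟨h1.trans h4, h3.trans h2⟩
    · rintro ⟨h1, h2⟩
      exact ⟨max (a u) (a v), ⟨le_max_left _ _, max_le (hab u).le h2⟩,
        le_max_right _ _, max_le h1 (hab v).le⟩
  obtain ⟨p, q, hpq, hle⟩ : ∃ p q : (Xᶜ : Set V), ¬ (G.induce Xᶜ).Reachable p q ∧
      a p ≤ a q := by
    obtain ⟨p, q, h⟩ := hcut
    rcases le_total (a p) (a q) with h' | h'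
    · exact ⟨p, q, h, h'⟩
    · exact ⟨q, p, fun hr => h hr.symm, h'⟩
  have step : ∀ u w : (Xᶜ : Set V), (G.induce Xᶜ).Reachable p u → a u ≤ b w → a w ≤ b u →
      (G.induce Xᶜ).Reachable p w := by
    intro u w hr h1 h2
    by_cases huw : u = w
    · exact huw ▸ hr
    · refine hr.trans (SimpleGraph.Adj.reachable ?_)
      rw [SimpleGraph.comap_adj]
      exact (hadj' _ _).2 ⟨fun h => huw (Subtype.ext h), h1, h2⟩
  have key : ∀ v : (Xᶜ : Set V), (G.induce Xᶜ).Reachable p v → b v < a q := by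
    intro v hv
    refine reach_ind _ (fun v : (Xᶜ : Set V) => b v < a q) hv ?_ ?_
    · by_contra h
      push Not at h
      exact hpq (step p q (SimpleGraph.Reachable.refl _) (hle.trans (hab q).le) h)
    · intro u w hr huw hu
      by_contra h
      push Not at h
      have h2 := (hadj' _ _).1 (SimpleGraph.comap_adj.1 huw)
      have hw := hr.trans huw.reachable
      exact hpq (step w q hw ((h2.2.2.trans hu.le).trans (hab q).le) h)
  obtain ⟨c, hc, hmax⟩ := Set.exists_max_image {v : (Xᶜ : Set V) | (G.induce Xᶜ).Reachable p v}
    (fun v => b v) (Set.toFinite _) ⟨p, SimpleGraph.Reachable.refl _⟩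
  simp only [Set.mem_ofPred_eq] at hc hmax
  have hrange : ∀ v, (∃ i, x i = a v) ∧ ∃ i, x i = b v := by
    intro v
    have h1 : a v ∈ Set.range x := by rw [hxrange]; exact Or.inl ⟨v, rfl⟩
    have h2 : b v ∈ Set.range x := by rw [hxrange]; exact Or.inr ⟨v, rfl⟩
    exact ⟨h1, h2⟩
  obtain ⟨j, hj⟩ := (hrange c).2
  obtain ⟨k, hk⟩ := (hrange q).1
  have hjk : j < k := by
    rw [← hx.lt_iff_lt, hj, hk]
    exact key c hc
  have hjl : j.val < l := by omega
  obtain ⟨i, rfl⟩ : ∃ i : Fin l, j = i.castSucc := ⟨⟨j.val, hjl⟩, rfl⟩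
  obtain ⟨hy1, hy2⟩ := hy i
  have gap : ∀ m, x m < y i ∨ y i < x m := by
    intro m
    rcases le_or_gt m i.castSucc with h | h
    · exact Or.inl ((hx.monotone h).trans_lt hy1)
    · exact Or.inr (hy2.trans_le (hx.monotone (Fin.castSucc_lt_iff_succ_le.1 h)))
  have gap2 : ∀ m, x m < y i → x m ≤ x i.castSucc := by
    intro m hm
    rcases le_or_gt m i.castSucc with h | h
    · exact hx.monotone h
    · exact absurd (hy2.trans_le (hx.monotone (Fin.castSucc_lt_iff_succ_le.1 h))) hm.not_gt
  have gapa : ∀ v, a v ≤ y i → a v ≤ b c := by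
    intro v hv
    obtain ⟨m, hm⟩ := (hrange v).1
    rcases gap m with h | h
    · rw [← hm, ← hj]; exact gap2 m h
    · rw [hm] at h; exact absurd hv h.not_ge
  have hsub : Vset i ⊆ X := by
    intro v hv
    rw [hVset] at hv
    by_contra hvX
    have hbv : b c < b v := by rw [← hj]; exact hy1.trans_le hv.2
    have := hmax ⟨v, hvX⟩ (step c ⟨v, hvX⟩ hc ((hab c).le.trans hbv.le) (gapa v hv.1))
    exact absurd this hbv.not_ge
  refine ⟨i, ?_⟩
  by_contra hne
  refine hmin (Vset i) (hsub.ssubset_of_ne (Ne.symm hne)) ?_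
  rw [card_helper G hconn]
  have hp : b p < y i := by
    refine lt_of_le_of_lt (hmax p (SimpleGraph.Reachable.refl _)) ?_
    rw [← hj]; exact hy1
  have hq : y i < a q := by
    by_contra h
    push Not at h
    exact absurd (gapa q h) (key c hc).not_ge
  refine ⟨⟨p, fun h => p.2 (hsub h)⟩, ⟨q, fun h => q.2 (hsub h)⟩, fun hr => ?_⟩
  have hfin := reach_ind _ (fun v : ((Vset i)ᶜ : Set V) => b v < y i) hr hp ?_
  · exact absurd (hfin.trans hq) (hab q).not_gt
  · intro u w _ huw hu
    have h2 := (hadj' _ _).1 (SimpleGraph.comap_adj.1 huw)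
    by_contra h
    push Not at h
    exact w.2 ((hVset i w).2 ⟨h2.2.2.trans hu.le, h⟩)
end

section
/- Let G be an interval graph with a fixed interval representation, and let V_1, …, V_l be the cliques determined by the points y_1, …, y_l. Suppose i_1 < i < i_2, u_1 ∈ V_{i_1} \ V_i and u_2 ∈ V_{i_2} \ V_i. Then every path in G from u_1 to u_2 passes through a vertex of V_i; in particular, u_1 and u_2 lie in different connected components of the subgraph of G induced on V(G) \ V_i. -/
/-- In an interval graph with a fixed representation, if `i₁ < i < i₂`,
`u₁ ∈ Vset i₁ \ Vset i` and `u₂ ∈ Vset i₂ \ Vset i`, then every walk from `u₁` to `u₂`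
meets `Vset i`; in particular `u₁` and `u₂` are in different components of the
subgraph induced on the complement of `Vset i`. -/
theorem stmt_1
    {V : Type*} [Fintype V] (G : SimpleGraph V)
    (a b : V → ℝ) (hab : ∀ v, a v < b v)
    (hadj : ∀ u v : V, G.Adj u v ↔
      u ≠ v ∧ (Set.Icc (a u) (b u) ∩ Set.Icc (a v) (b v)).Nonempty)
    (l : ℕ) (x : Fin (l + 1) → ℝ) (hx : StrictMono x)
    (hxrange : Set.range x = Set.range a ∪ Set.range b)
    (y : Fin l → ℝ)
    (hy : ∀ i : Fin l, x i.castSucc < y i ∧ y i < x i.succ)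
    (Vset : Fin l → Set V)
    (hVset : ∀ i v, v ∈ Vset i ↔ y i ∈ Set.Icc (a v) (b v))
    (i₁ i i₂ : Fin l) (h₁ : i₁ < i) (h₂ : i < i₂)
    (u₁ u₂ : V)
    (hu₁ : u₁ ∈ Vset i₁ \ Vset i) (hu₂ : u₂ ∈ Vset i₂ \ Vset i) :
    (∀ p : G.Walk u₁ u₂, ∃ w ∈ p.support, w ∈ Vset i) ∧
      ¬ (G.induce (Vset i)ᶜ).Reachable ⟨u₁, hu₁.2⟩ ⟨u₂, hu₂.2⟩ := by
  have ymono : ∀ j k : Fin l, j < k → y j < y k := by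
    intro j k hjk
    have h : x j.succ ≤ x k.castSucc := hx.monotone (by
      rw [Fin.le_def]; simp; exact hjk)
    linarith [(hy j).2, (hy k).1]
  have key : ∀ (u v : V) (p : G.Walk u v), b u < y i → y i < a v →
      ∃ w ∈ p.support, w ∈ Vset i := by
    intro u v p
    induction p with
    | nil =>
      intro h1 h2
      rename_i u
      linarith [hab u]
    | cons h p ih =>
      intro h1 h2
      rename_i u v w
      by_cases hv : v ∈ Vset i
      · exact ⟨v, by simp, hv⟩
      · obtain ⟨-, t, ht1, ht2⟩ := (hadj u v).1 h
        have hbv : b v < y i := by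
          by_contra hc
          push Not at hc
          exact hv ((hVset i v).2 ⟨by linarith [ht1.2, ht2.1], hc⟩)
        obtain ⟨z, hz, hz'⟩ := ih hbv h2
        exact ⟨z, by simp [hz], hz'⟩
  have hb : b u₁ < y i := by
    by_contra hc
    push Not at hc
    exact hu₁.2 ((hVset i u₁).2
      ⟨by linarith [((hVset i₁ u₁).1 hu₁.1).1, ymono _ _ h₁], hc⟩)
  have ha : y i < a u₂ := by
    by_contra hc
    push Not at hc
    exact hu₂.2 ((hVset i u₂).2
      ⟨hc, by linarith [((hVset i₂ u₂).1 hu₂.1).2, ymono _ _ h₂]⟩)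
  refine ⟨fun p => key _ _ p hb ha, ?_⟩
  rintro ⟨p⟩
  obtain ⟨w, hw, hwi⟩ := key _ _ (p.map (SimpleGraph.Embedding.induce (Vset i)ᶜ).toHom) hb ha
  rw [SimpleGraph.Walk.support_map, List.mem_map] at hw
  obtain ⟨z, -, rfl⟩ := hw
  exact z.2 hwi
end

section
/- Let G be a connected interval graph with a fixed interval representation, let V_1, …, V_l be the cliques determined by the points y_1, …, y_l, and fix an index i with 1 ≤ i ≤ l. If there exist a vertex u whose interval lies entirely strictly to the left of y_i (i.e., b_u < y_i) and a vertex w whose interval lies entirely strictly to the right of y_i (i.e., a_w > y_i), then V_i is a cut-set of G: the subgraph of G induced on V(G) \ V_i is disconnected, with u and w lying in different connected components. -/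
/-- In a connected interval graph with a fixed representation, if some
vertex `u` has its interval entirely strictly left of `y i` and some vertex `w` has its
interval entirely strictly right of `y i`, then `Vset i` is a cut-set: the subgraph
induced on its complement has more connected components than `G`, with `u` and `w`
lying in different components. -/
theorem stmt_2
    {V : Type*} [Fintype V] (G : SimpleGraph V)
    (a b : V → ℝ) (hab : ∀ v, a v < b v)
    (hadj : ∀ u v : V, G.Adj u v ↔
      u ≠ v ∧ (Set.Icc (a u) (b u) ∩ Set.Icc (a v) (b v)).Nonempty)
    (hconn : G.Connected)
    (l : ℕ) (x : Fin (l + 1) → ℝ) (hx : StrictMono x)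
    (hxrange : Set.range x = Set.range a ∪ Set.range b)
    (y : Fin l → ℝ)
    (hy : ∀ i : Fin l, x i.castSucc < y i ∧ y i < x i.succ)
    (Vset : Fin l → Set V)
    (hVset : ∀ i v, v ∈ Vset i ↔ y i ∈ Set.Icc (a v) (b v))
    (i : Fin l) (u w : V)
    (hu : b u < y i) (hw : y i < a w) :
    ∃ (hu' : u ∈ (Vset i)ᶜ) (hw' : w ∈ (Vset i)ᶜ),
      ¬ (G.induce (Vset i)ᶜ).Reachable ⟨u, hu'⟩ ⟨w, hw'⟩ ∧
      Nat.card G.ConnectedComponent <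
        Nat.card (G.induce (Vset i)ᶜ).ConnectedComponent := by
  have hu' : u ∈ (Vset i)ᶜ := by
    intro h
    have := ((hVset i u).1 h).2
    linarith
  have hw' : w ∈ (Vset i)ᶜ := by
    intro h
    have := ((hVset i w).1 h).1
    linarith
  have key : ∀ p q : ((Vset i)ᶜ : Set V), (G.induce (Vset i)ᶜ).Walk p q →
      b p.1 < y i → b q.1 < y i := by
    intro p q W
    induction W with
    | nil => exact id
    | @cons p r q h W ih =>
      intro hp
      apply ih
      have h2 : G.Adj p.1 r.1 := h
      obtain ⟨-, t, ht1, ht2⟩ := (hadj _ _).1 h2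
      by_contra hc
      apply r.2
      rw [hVset]
      exact ⟨by linarith [ht1.2, ht2.1], not_lt.1 hc⟩
  have hnr : ¬ (G.induce (Vset i)ᶜ).Reachable ⟨u, hu'⟩ ⟨w, hw'⟩ := by
    rintro ⟨W⟩
    have h1 := key _ _ W hu
    have h2 := hab w
    simp only at h1
    linarith
  refine ⟨hu', hw', hnr, ?_⟩
  have h1 : Nat.card G.ConnectedComponent ≤ 1 := by
    have := hconn.preconnected.subsingleton_connectedComponent
    exact Finite.card_le_one_iff_subsingleton.2 this
  have h2 : 1 < Nat.card (G.induce (Vset i)ᶜ).ConnectedComponent := by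
    rw [Finite.one_lt_card_iff_nontrivial]
    exact ⟨⟨SimpleGraph.connectedComponentMk _ ⟨u, hu'⟩,
      SimpleGraph.connectedComponentMk _ ⟨w, hw'⟩,
      fun h => hnr (SimpleGraph.ConnectedComponent.exact h)⟩⟩
  omega
end

section
/- Let G be an interval graph with a fixed interval representation, and let A be a dominating set of G of minimum cardinality. Then every vertex v ∈ A is adjacent to at most two vertices of A. -/
/-- In an interval graph with a fixed representation, every vertex of a
minimum dominating set `A` is adjacent to at most two vertices of `A`. -/
theorem stmt_3
    {V : Type*} [Fintype V] (G : SimpleGraph V)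
    (a b : V → ℝ) (hab : ∀ v, a v < b v)
    (hadj : ∀ u v : V, G.Adj u v ↔
      u ≠ v ∧ (Set.Icc (a u) (b u) ∩ Set.Icc (a v) (b v)).Nonempty)
    (A : Set V)
    (hdom : ∀ v : V, v ∈ A ∨ ∃ u ∈ A, G.Adj v u)
    (hmin : ∀ S : Set V, (∀ v : V, v ∈ S ∨ ∃ u ∈ S, G.Adj v u) → A.ncard ≤ S.ncard) :
    ∀ v ∈ A, ({u ∈ A | G.Adj v u}).ncard ≤ 2 := by
  have key : ∀ u p q : V, u ∈ A → p ∈ A → q ∈ A → p ≠ u → q ≠ u →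
      (∀ t, a u ≤ t → t ≤ b u → (a p ≤ t ∧ t ≤ b p) ∨ (a q ≤ t ∧ t ≤ b q)) → False := by
    intro u p q hu hp hq hpu hqu hc
    have h1 := hmin (A \ {u}) (by
      intro w
      have aux : ∀ t, a w ≤ t → t ≤ b w → a u ≤ t → t ≤ b u → w ≠ p → w ≠ q →
          ∃ u' ∈ A \ {u}, G.Adj w u' := by
        intro t h1 h2 h3 h4 hwp hwq
        rcases hc t h3 h4 with h | h
        · exact ⟨p, ⟨hp, hpu⟩, (hadj w p).2 ⟨hwp, t, ⟨h1, h2⟩, h⟩⟩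
        · exact ⟨q, ⟨hq, hqu⟩, (hadj w q).2 ⟨hwq, t, ⟨h1, h2⟩, h⟩⟩
      by_cases hwu : w = u
      · subst hwu
        exact Or.inr (aux (a w) le_rfl (hab w).le le_rfl (hab w).le hpu.symm hqu.symm)
      by_cases hwA : w ∈ A
      · exact Or.inl ⟨hwA, hwu⟩
      right
      rcases hdom w with h | ⟨u', hu', hw⟩
      · exact absurd h hwA
      by_cases e : u' = u
      · subst e
        obtain ⟨_, t, ⟨h1, h2⟩, h3, h4⟩ := (hadj w u').1 hw
        exact aux t h1 h2 h3 h4 (fun e => hwA (e ▸ hp)) (fun e => hwA (e ▸ hq))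
      · exact ⟨u', ⟨hu', e⟩, hw⟩)
    have h2 := Set.ncard_diff_singleton_lt_of_mem hu (Set.toFinite A)
    omega
  intro v hv
  have inter : ∀ x, G.Adj v x → x ≠ v ∧ a x ≤ b v ∧ a v ≤ b x := by
    intro x hx
    obtain ⟨h, t, ⟨h1, h2⟩, h3, h4⟩ := (hadj v x).1 hx
    exact ⟨h.symm, h3.trans h2, h1.trans h4⟩
  have left : ∀ x y, x ∈ A → y ∈ A → G.Adj v x → G.Adj v y → x ≠ y →
      a x < a v → a y < a v → a x ≤ a y → False := by
    intro x y hx hy hvx hvy hxy h1 h2 h3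
    obtain ⟨nx, x1, x2⟩ := inter x hvx
    obtain ⟨ny, y1, y2⟩ := inter y hvy
    by_cases h : b y ≤ b v
    · refine key y x v hy hx hv hxy ny.symm fun t t1 t2 => ?_
      rcases le_total t (a v) with h' | h'
      · left; constructor <;> linarith
      · right; constructor <;> linarith
    · refine key v y y hv hy hy ny ny fun t t1 t2 => ?_
      left; constructor <;> linarith
  have right : ∀ x y, x ∈ A → y ∈ A → G.Adj v x → G.Adj v y → x ≠ y →
      b v < b x → b v < b y → b y ≤ b x → False := by
    intro x y hx hy hvx hvy hxy h1 h2 h3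
    obtain ⟨nx, x1, x2⟩ := inter x hvx
    obtain ⟨ny, y1, y2⟩ := inter y hvy
    by_cases h : a v ≤ a y
    · refine key y x v hy hx hv hxy ny.symm fun t t1 t2 => ?_
      rcases le_total t (b v) with h' | h'
      · right; constructor <;> linarith
      · left; constructor <;> linarith
    · refine key v y y hv hy hy ny ny fun t t1 t2 => ?_
      left; constructor <;> linarith
  have left' : ∀ x y, x ∈ A → y ∈ A → G.Adj v x → G.Adj v y → x ≠ y →
      a x < a v → a y < a v → False := fun x y hx hy hvx hvy hxy h1 h2 =>
    (le_total (a x) (a y)).elim (left x y hx hy hvx hvy hxy h1 h2)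
      (left y x hy hx hvy hvx hxy.symm h2 h1)
  have right' : ∀ x y, x ∈ A → y ∈ A → G.Adj v x → G.Adj v y → x ≠ y →
      b v < b x → b v < b y → False := fun x y hx hy hvx hvy hxy h1 h2 =>
    (le_total (b y) (b x)).elim (right x y hx hy hvx hvy hxy h1 h2)
      (right y x hy hx hvy hvx hxy.symm h2 h1)
  have out : ∀ x, x ∈ A → G.Adj v x → a x < a v ∨ b v < b x := by
    intro x hx hvx
    by_contra! h
    have hn := (inter x hvx).1.symm
    exact key x v v hx hv hv hn hn fun t t1 t2 => Or.inl ⟨h.1.trans t1, t2.trans h.2⟩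
  by_contra! hcard
  obtain ⟨x, y, z, ⟨hx, hvx⟩, ⟨hy, hvy⟩, ⟨hz, hvz⟩, hxy, hxz, hyz⟩ :=
    (Set.two_lt_ncard_iff (Set.toFinite _)).1 hcard
  have l1 := left' x y hx hy hvx hvy hxy
  have l2 := left' x z hx hz hvx hvz hxz
  have l3 := left' y z hy hz hvy hvz hyz
  have r1 := right' x y hx hy hvx hvy hxy
  have r2 := right' x z hx hz hvx hvz hxz
  have r3 := right' y z hy hz hvy hvz hyz
  have o1 := out x hx hvx
  have o2 := out y hy hvy
  have o3 := out z hz hvz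
  tauto
end

section
/- Let G be an interval graph with a fixed interval representation, and let A be a dominating set of G of minimum cardinality. Then every vertex v ∉ A is adjacent to at most five vertices of A. -/
/-- In an interval graph with a fixed representation, every vertex outside
a minimum dominating set `A` is adjacent to at most five vertices of `A`. -/
theorem stmt_4
    {V : Type*} [Fintype V] (G : SimpleGraph V)
    (a b : V → ℝ) (hab : ∀ v, a v < b v)
    (hadj : ∀ u v : V, G.Adj u v ↔
      u ≠ v ∧ (Set.Icc (a u) (b u) ∩ Set.Icc (a v) (b v)).Nonempty)
    (A : Set V)
    (hdom : ∀ v : V, v ∈ A ∨ ∃ u ∈ A, G.Adj v u)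
    (hmin : ∀ S : Set V, (∀ v : V, v ∈ S ∨ ∃ u ∈ S, G.Adj v u) → A.ncard ≤ S.ncard) :
    ∀ v ∉ A, ({u ∈ A | G.Adj v u}).ncard ≤ 5 := by
  intro v hv
  have hadj' : ∀ u w : V, G.Adj u w ↔ u ≠ w ∧ a u ≤ b w ∧ a w ≤ b u := by
    intro u w
    rw [hadj, Set.Icc_inter_Icc, Set.nonempty_Icc]
    have h1 := (hab u).le
    have h2 := (hab w).le
    simp only [sup_le_iff, le_inf_iff]
    tauto
  have key : ∀ S : Set V, (∀ w : V, w ∈ S ∨ ∃ u ∈ S, G.Adj w u) ↔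
      ∀ w, ∃ u ∈ S, a w ≤ b u ∧ a u ≤ b w := by
    intro S
    refine forall_congr' fun w => ⟨?_, ?_⟩
    · rintro (h | ⟨u, hu, h⟩)
      · exact ⟨w, h, (hab w).le, (hab w).le⟩
      · exact ⟨u, hu, ((hadj' w u).1 h).2⟩
    · rintro ⟨u, hu, h⟩
      by_cases e : w = u
      · left; rw [e]; exact hu
      · exact Or.inr ⟨u, hu, (hadj' w u).2 ⟨e, h⟩⟩
  rw [key] at hdom
  set N : Set V := {u ∈ A | G.Adj v u} with hN
  by_contra hc
  have hne : N.Nonempty := by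
    rw [Set.nonempty_iff_ne_empty]
    intro h
    rw [h] at hc
    simp at hc
  obtain ⟨l, hl, hlm⟩ := Set.exists_min_image N a N.toFinite hne
  obtain ⟨r, hr, hrm⟩ := Set.exists_max_image N b N.toFinite hne
  have hS := hmin ((A \ N) ∪ {v, l, r}) (by
    rw [key]
    intro w
    obtain ⟨u, hu, h1, h2⟩ := hdom w
    by_cases huN : u ∈ N
    · have e1 := hlm u huN
      have e2 := hrm u huN
      have f1 := ((hadj' v l).1 hl.2).2
      have f2 := ((hadj' v r).1 hr.2).2
      have g := hab w
      by_cases c1 : b w < a v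
      · exact ⟨l, by simp, by linarith, by linarith⟩
      · by_cases c2 : b v < a w
        · exact ⟨r, by simp, by linarith, by linarith⟩
        · exact ⟨v, by simp, by linarith, by linarith⟩
    · exact ⟨u, Or.inl ⟨hu, huN⟩, h1, h2⟩)
  have h1 := Set.ncard_union_le (A \ N) {v, l, r}
  have h2 : ({v, l, r} : Set V).ncard ≤ 3 := by
    have := Set.ncard_insert_le v {l, r}
    have := Set.ncard_insert_le l {r}
    have := Set.ncard_singleton r
    omega
  have h3 := Set.ncard_sdiff_add_ncard_of_subset (s := N) (t := A) (fun x hx => hx.1) A.toFinite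
  omega
end

section
/- Let G be an interval graph with a fixed interval representation on n ≥ 1 vertices, let δ be the minimum degree of G, and let γ be the minimum cardinality of a dominating set of G. Then γ·(δ + 1) ≤ 5n. -/
theorem greedy_aux {V : Type*} [Fintype V] [DecidableEq V] (a b : V → ℝ) (hab : ∀ v, a v < b v)
    (n : ℕ) : ∀ U : Finset V, U.card ≤ n → ∃ S P : Finset V, S.card ≤ P.card ∧ P ⊆ U ∧
      (∀ v ∈ U, ∃ u ∈ S, a v ≤ b u ∧ a u ≤ b v) ∧
      (∀ v ∈ P, ∀ w ∈ P, v ≠ w → ∀ x, (a v ≤ b x ∧ a x ≤ b v) → ¬ (a w ≤ b x ∧ a x ≤ b w)) := by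
  induction n with
  | zero =>
    intro U hU
    have : U = ∅ := by simpa using hU
    subst this
    exact ⟨∅, ∅, by simp⟩
  | succ n ih =>
    intro U hU
    rcases U.eq_empty_or_nonempty with rfl | hne
    · exact ⟨∅, ∅, by simp⟩
    obtain ⟨v, hv, hmin⟩ := U.exists_min_image b hne
    obtain ⟨u, hu, hmax⟩ := (Finset.univ.filter (fun x => a v ≤ b x ∧ a x ≤ b v)).exists_max_image b
      ⟨v, by simp [(hab v).le]⟩
    simp only [Finset.mem_filter, Finset.mem_univ, true_and] at hu hmax
    have hvu : a v ≤ b u := hu.1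
    have hss : U.filter (fun w => b u < a w) ⊂ U :=
      Finset.filter_ssubset.2 ⟨v, hv, not_lt.2 hvu⟩
    obtain ⟨S, P, hc, hP, hd, hp⟩ := ih (U.filter (fun w => b u < a w))
      (by have := Finset.card_lt_card hss; omega)
    have hPa : ∀ w ∈ P, b u < a w := fun w hw => (Finset.mem_filter.1 (hP hw)).2
    have hvP : v ∉ P := fun h => absurd (hPa v h) (not_lt.2 hvu)
    refine ⟨insert u S, insert v P, ?_, ?_, ?_, ?_⟩
    · rw [Finset.card_insert_of_notMem hvP]
      have := Finset.card_insert_le u S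
      omega
    · exact Finset.insert_subset hv (hP.trans hss.subset)
    · intro w hw
      by_cases h : b u < a w
      · obtain ⟨s, hs, h'⟩ := hd w (Finset.mem_filter.2 ⟨hw, h⟩)
        exact ⟨s, Finset.mem_insert_of_mem hs, h'⟩
      · exact ⟨u, Finset.mem_insert_self _ _, not_lt.1 h, hu.2.trans (hmin w hw)⟩
    · intro x hx y hy hxy z hz hz'
      rcases Finset.mem_insert.1 hx with rfl | hx1 <;> rcases Finset.mem_insert.1 hy with rfl | hy1
      · exact hxy rfl
      · linarith [hmax z hz, hPa y hy1]
      · linarith [hmax z hz', hPa x hx1]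
      · exact hp x hx1 y hy1 hxy z hz hz'

/-- For an interval graph on `n ≥ 1` vertices with minimum degree `δ` and
domination number `γ`, we have `γ * (δ + 1) ≤ 5 * n`. -/
theorem stmt_6
    {V : Type*} [Fintype V] (G : SimpleGraph V)
    (a b : V → ℝ) (hab : ∀ v, a v < b v)
    (hadj : ∀ u v : V, G.Adj u v ↔
      u ≠ v ∧ (Set.Icc (a u) (b u) ∩ Set.Icc (a v) (b v)).Nonempty)
    (hn : 1 ≤ Fintype.card V)
    (δ : ℕ) (hδ : IsLeast (Set.range fun v : V => (G.neighborSet v).ncard) δ)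
    (γ : ℕ)
    (hγ : IsLeast {k : ℕ | ∃ S : Set V,
      (∀ v : V, v ∈ S ∨ ∃ u ∈ S, G.Adj v u) ∧ S.ncard = k} γ) :
    γ * (δ + 1) ≤ 5 * Fintype.card V := by
  classical
  have hR : ∀ u v, G.Adj u v ↔ u ≠ v ∧ (a u ≤ b v ∧ a v ≤ b u) := by
    intro u v
    rw [hadj, Set.Icc_inter_Icc, Set.nonempty_Icc]
    simp only [sup_le_iff, le_inf_iff]
    have := (hab u).le
    have := (hab v).le
    tauto
  obtain ⟨S, P, hc, -, hd, hp⟩ := greedy_aux a b hab _ Finset.univ le_rfl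
  have h1 : γ ≤ S.card := hγ.2 ⟨S, fun v => by
    obtain ⟨u, hu, h⟩ := hd v (Finset.mem_univ _)
    by_cases hvu : v = u
    · subst hvu; exact Or.inl hu
    · exact Or.inr ⟨u, hu, (hR v u).2 ⟨hvu, h⟩⟩, Set.ncard_coe_finset S⟩
  let N : V → Finset V := fun v => Finset.univ.filter (fun x => a v ≤ b x ∧ a x ≤ b v)
  have h2 : ∀ v ∈ P, δ + 1 ≤ (N v).card := by
    intro v _
    have hle : δ ≤ (G.neighborSet v).ncard := hδ.2 ⟨v, rfl⟩
    have he : insert v (G.neighborSet v) = (N v : Set V) := by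
      ext x
      simp only [Set.mem_insert_iff, SimpleGraph.mem_neighborSet, hR, N, Finset.coe_filter,
        Finset.mem_univ, true_and, Set.mem_ofPred_eq]
      constructor
      · rintro (rfl | h)
        · exact ⟨(hab x).le, (hab x).le⟩
        · exact h.2
      · intro h
        by_cases hx : x = v
        · exact Or.inl hx
        · exact Or.inr ⟨Ne.symm hx, h⟩
    rw [← Set.ncard_coe_finset, ← he, Set.ncard_insert_of_notMem (by simp) (Set.toFinite _)]
    omega
  have h3 : (P.biUnion N).card = ∑ v ∈ P, (N v).card := by
    apply Finset.card_biUnion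
    intro v hv w hw hvw
    refine Finset.disjoint_left.2 ?_
    intro x hx hx'
    exact hp v hv w hw hvw x (Finset.mem_filter.1 hx).2 (Finset.mem_filter.1 hx').2
  have h4 : P.card * (δ + 1) ≤ ∑ v ∈ P, (N v).card := by
    simpa using Finset.card_nsmul_le_sum P (fun v => (N v).card) (δ + 1) h2
  have h5 := Finset.card_le_univ (P.biUnion N)
  have h6 : γ * (δ + 1) ≤ P.card * (δ + 1) := Nat.mul_le_mul_right _ (h1.trans hc)
  omega
end

section
/- Let G be an interval graph with a fixed interval representation on n ≥ 1 vertices, let δ be the minimum degree of G, and let γ be the minimum cardinality of a dominating set of G. Then γ ≤ √(5n) or δ + 1 ≤ √(5n). -/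
open Classical in
theorem aux_dom {V : Type*} [Fintype V] (a b : V → ℝ) (hab : ∀ v, a v < b v) (k : ℕ)
    (hk : ∀ v, k ≤ (Finset.univ.filter fun x => a x ≤ b v ∧ a v ≤ b x).card) (U : Finset V) :
    ∃ S : Finset V, (∀ x ∈ U, ∃ s ∈ S, a x ≤ b s ∧ a s ≤ b x) ∧
      S.card * k ≤ (Finset.univ.filter fun x => ∃ p ∈ U, a x ≤ b p ∧ a p ≤ b x).card := by
  induction U using Finset.strongInduction with
  | H U ih =>
    rcases U.eq_empty_or_nonempty with rfl | hU
    · exact ⟨∅, by simp, by simp⟩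
    obtain ⟨u, huU, hu⟩ := U.exists_min_image b hU
    obtain ⟨w, hw, hwm⟩ := (Finset.univ.filter fun x => a x ≤ b u ∧ a u ≤ b x).exists_max_image b
      ⟨u, by simp [(hab u).le]⟩
    simp only [Finset.mem_filter, Finset.mem_univ, true_and] at hw hwm
    have hbu : b u ≤ b w := hwm u ⟨(hab u).le, (hab u).le⟩
    have hss : (U.filter fun x => b w < a x) ⊂ U := by
      rw [Finset.filter_ssubset]
      exact ⟨u, huU, by linarith [hab u]⟩
    obtain ⟨S, hS, hc⟩ := ih _ hss
    refine ⟨insert w S, ?_, ?_⟩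
    · intro x hx
      by_cases h : b w < a x
      · obtain ⟨s, hs, h'⟩ := hS x (by simp [hx, h])
        exact ⟨s, by simp [hs], h'⟩
      · exact ⟨w, by simp, by linarith, by linarith [hu x hx, hw.1]⟩
    · have hd : Disjoint (Finset.univ.filter fun x => a x ≤ b u ∧ a u ≤ b x)
          (Finset.univ.filter fun x => ∃ p ∈ U.filter (fun x => b w < a x),
            a x ≤ b p ∧ a p ≤ b x) := by
        rw [Finset.disjoint_left]
        intro x hx hx'
        simp only [Finset.mem_filter, Finset.mem_univ, true_and] at hx hx'
        obtain ⟨p, ⟨_, hp⟩, _, hp'⟩ := hx'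
        linarith [hwm x hx]
      calc (insert w S).card * k ≤ (S.card + 1) * k :=
            Nat.mul_le_mul_right _ (Finset.card_insert_le _ _)
        _ ≤ _ + _ := by
            rw [add_mul, one_mul, add_comm]
            exact Nat.add_le_add (hk u) hc
        _ = _ := (Finset.card_union_of_disjoint hd).symm
        _ ≤ _ := by
            apply Finset.card_le_card
            intro x hx
            simp only [Finset.mem_union, Finset.mem_filter, Finset.mem_univ, true_and] at hx ⊢
            rcases hx with hx | ⟨p, ⟨hp, _⟩, h⟩
            · exact ⟨u, huU, hx⟩
            · exact ⟨p, hp, h⟩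

/-- For an interval graph on `n ≥ 1` vertices with minimum degree `δ` and
domination number `γ`, either `γ ≤ √(5n)` or `δ + 1 ≤ √(5n)`. -/
theorem stmt_7
    {V : Type*} [Fintype V] (G : SimpleGraph V)
    (a b : V → ℝ) (hab : ∀ v, a v < b v)
    (hadj : ∀ u v : V, G.Adj u v ↔
      u ≠ v ∧ (Set.Icc (a u) (b u) ∩ Set.Icc (a v) (b v)).Nonempty)
    (hn : 1 ≤ Fintype.card V)
    (δ : ℕ) (hδ : IsLeast (Set.range fun v : V => (G.neighborSet v).ncard) δ)
    (γ : ℕ)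
    (hγ : IsLeast {k : ℕ | ∃ S : Set V,
      (∀ v : V, v ∈ S ∨ ∃ u ∈ S, G.Adj v u) ∧ S.ncard = k} γ) :
    (γ : ℝ) ≤ Real.sqrt (5 * Fintype.card V) ∨
      (δ : ℝ) + 1 ≤ Real.sqrt (5 * Fintype.card V) := by
  classical
  have hadj' : ∀ u v : V, G.Adj u v ↔ u ≠ v ∧ (a u ≤ b v ∧ a v ≤ b u) := by
    intro u v
    rw [hadj, Set.Icc_inter_Icc, Set.nonempty_Icc]
    simp only [sup_le_iff, le_inf_iff]
    have := (hab u).le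
    have := (hab v).le
    tauto
  have hk : ∀ v, δ + 1 ≤ (Finset.univ.filter fun x => a x ≤ b v ∧ a v ≤ b x).card := by
    intro v
    have h1 : δ ≤ (G.neighborSet v).ncard := hδ.2 ⟨v, rfl⟩
    have h2 : insert v (G.neighborSet v) =
        ((Finset.univ.filter fun x => a x ≤ b v ∧ a v ≤ b x : Finset V) : Set V) := by
      ext x
      simp only [Set.mem_insert_iff, SimpleGraph.mem_neighborSet, hadj', Finset.coe_filter,
        Finset.mem_univ, true_and, Set.mem_setOf_eq]
      by_cases h : x = v
      · subst h; simp [(hab x).le]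
      · simp [h, Ne.symm h, and_comm]
    rw [← Set.ncard_coe_finset, ← h2, Set.ncard_insert_of_notMem (by simp) (Set.toFinite _)]
    omega
  obtain ⟨S, hS, hc⟩ := aux_dom a b hab (δ + 1) hk Finset.univ
  have hγS : γ ≤ S.card := by
    refine hγ.2 ⟨(S : Set V), ?_, Set.ncard_coe_finset S⟩
    intro v
    obtain ⟨s, hs, h⟩ := hS v (Finset.mem_univ _)
    by_cases hvs : v = s
    · left; rw [hvs]; exact hs
    · exact Or.inr ⟨s, hs, (hadj' v s).2 ⟨hvs, h⟩⟩
  have hmain : γ * (δ + 1) ≤ Fintype.card V :=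
    (Nat.mul_le_mul_right _ hγS).trans (hc.trans (Finset.card_le_univ _))
  have hmain' : (γ : ℝ) * (δ + 1) ≤ Fintype.card V := by exact_mod_cast hmain
  by_contra! hcon
  obtain ⟨h1, h2⟩ := hcon
  have h3 : (1 : ℝ) ≤ Fintype.card V := by exact_mod_cast hn
  have h4 := Real.mul_self_sqrt (show (0 : ℝ) ≤ 5 * Fintype.card V by positivity)
  have h5 := Real.sqrt_nonneg (5 * (Fintype.card V : ℝ))
  have h6 := mul_le_mul h1.le h2.le h5 (h5.trans h1.le)
  linarith
end

section
/- Let G be a connected interval graph with a fixed interval representation, let V_1, …, V_l be the cliques determined by the points y_1, …, y_l, let 1 ≤ a ≤ b ≤ l, and let H = G[a,b] be the subgraph of G induced on ⋃_{a ≤ i ≤ b} V_i. If S ⊆ V(G) is a set of vertices such that every vertex of H belongs to S or is adjacent in G to a vertex of S, then there exists a set S' ⊆ V(H) with |S'| ≤ |S| that is a dominating set of H. -/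
/-- In a connected interval graph with a fixed representation, let
`U = ⋃_{a₀ ≤ i ≤ b₀} Vset i` be the vertex set of an interval subgraph. If a set `S` of
vertices of `G` dominates (in `G`) every vertex of `U`, then there is a set `S' ⊆ U`
with `|S'| ≤ |S|` dominating the induced subgraph on `U`. -/
theorem stmt_8
    {V : Type*} [Fintype V] (G : SimpleGraph V)
    (a b : V → ℝ) (hab : ∀ v, a v < b v)
    (hadj : ∀ u v : V, G.Adj u v ↔
      u ≠ v ∧ (Set.Icc (a u) (b u) ∩ Set.Icc (a v) (b v)).Nonempty)
    (hconn : G.Connected)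
    (l : ℕ) (x : Fin (l + 1) → ℝ) (hx : StrictMono x)
    (hxrange : Set.range x = Set.range a ∪ Set.range b)
    (y : Fin l → ℝ)
    (hy : ∀ i : Fin l, x i.castSucc < y i ∧ y i < x i.succ)
    (Vset : Fin l → Set V)
    (hVset : ∀ i v, v ∈ Vset i ↔ y i ∈ Set.Icc (a v) (b v))
    (a₀ b₀ : Fin l) (hab₀ : a₀ ≤ b₀)
    (U : Set V) (hU : U = ⋃ i ∈ Set.Icc a₀ b₀, Vset i)
    (S : Set V)
    (hS : ∀ v ∈ U, v ∈ S ∨ ∃ u ∈ S, G.Adj v u) :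
    ∃ S' : Set V, S' ⊆ U ∧ S'.ncard ≤ S.ncard ∧
      ∀ v ∈ U, v ∈ S' ∨ ∃ u ∈ S', G.Adj v u := by
  classical
  have hUm : ∀ v, v ∈ U ↔ ∃ i, a₀ ≤ i ∧ i ≤ b₀ ∧ a v ≤ y i ∧ y i ≤ b v := by
    intro v
    subst hU
    simp only [Set.mem_iUnion, hVset, Set.mem_Icc, exists_prop, and_assoc]
  have hmono : ∀ i j : Fin l, i ≤ j → y i ≤ y j := by
    intro i j hij
    rcases hij.eq_or_lt with h | h
    · rw [h]
    · have h1 : x i.succ ≤ x j.castSucc := hx.monotone (by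
        rw [Fin.le_def]; simp only [Fin.val_succ, Fin.val_castSucc]; rw [Fin.lt_def] at h; omega)
      linarith [(hy i).2, (hy j).1]
  have hside : ∀ u, u ∉ U → b u < y a₀ ∨ y b₀ < a u := by
    intro u hu
    have hno : ∀ i, a₀ ≤ i → i ≤ b₀ → a u ≤ y i → b u < y i := by
      intro i h1 h2 h3
      by_contra h4
      exact hu ((hUm u).2 ⟨i, h1, h2, h3, not_lt.1 h4⟩)
    obtain ⟨p, hp⟩ : a u ∈ Set.range x := by rw [hxrange]; exact Or.inl ⟨u, rfl⟩
    obtain ⟨q, hq⟩ : b u ∈ Set.range x := by rw [hxrange]; exact Or.inr ⟨u, rfl⟩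
    have hpq : p < q := hx.lt_iff_lt.1 (by rw [hp, hq]; exact hab u)
    by_cases h1 : p ≤ a₀.castSucc
    · left
      apply hno a₀ le_rfl hab₀
      have := hx.monotone h1
      linarith [(hy a₀).1]
    by_cases h2 : p ≤ b₀.castSucc
    · exfalso
      rw [Fin.le_def] at h1 h2
      rw [Fin.lt_def] at hpq
      simp only [Fin.val_castSucc] at h1 h2
      have hpl : p.val < l := lt_of_le_of_lt h2 b₀.2
      let i : Fin l := ⟨p.val, hpl⟩
      have hi1 : i.castSucc = p := Fin.ext rfl
      have hi2 : x i.succ ≤ x q := hx.monotone (by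
        rw [Fin.le_def]; simp only [Fin.val_succ, i]; omega)
      have h3 := hy i
      rw [hi1] at h3
      have := hno i (by rw [Fin.le_def]; simp only [i]; omega)
        (by rw [Fin.le_def]; simp only [i]; omega) (by linarith)
      linarith
    · right
      have : x b₀.succ ≤ x p := hx.monotone (by
        rw [Fin.le_def] at h2 ⊢
        simp only [Fin.val_castSucc, Fin.val_succ] at h2 ⊢; omega)
      linarith [(hy b₀).2]
  have hmeet : ∀ u v, G.Adj v u → a v ≤ b u ∧ a u ≤ b v := by
    intro u v h
    obtain ⟨-, z, hz1, hz2⟩ := (hadj v u).1 h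
    exact ⟨hz1.1.trans hz2.2, hz2.1.trans hz1.2⟩
  have key : ∀ u, ∃ w, (∃ v ∈ U, v = u ∨ G.Adj v u) →
      w ∈ U ∧ ∀ v ∈ U, (v = u ∨ G.Adj v u) → v = w ∨ G.Adj v w := by
    intro u
    by_cases hu : u ∈ U
    · exact ⟨u, fun _ => ⟨hu, fun v _ h => h⟩⟩
    by_cases hex : ∃ v ∈ U, v = u ∨ G.Adj v u
    · obtain ⟨w, hw, hwu⟩ := hex
      refine ⟨w, fun _ => ⟨hw, fun v hv hvu => ?_⟩⟩
      have hwu' : G.Adj w u := hwu.resolve_left (fun h => hu (h ▸ hw))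
      have hvu' : G.Adj v u := hvu.resolve_left (fun h => hu (h ▸ hv))
      have m1 := hmeet _ _ hwu'
      have m2 := hmeet _ _ hvu'
      obtain ⟨i, i1, i2, i3, i4⟩ := (hUm w).1 hw
      obtain ⟨j, j1, j2, j3, j4⟩ := (hUm v).1 hv
      have e1 := hmono _ _ i1
      have e2 := hmono _ _ i2
      have e3 := hmono _ _ j1
      have e4 := hmono _ _ j2
      by_cases hvw : v = w
      · exact Or.inl hvw
      right
      rw [hadj]
      refine ⟨hvw, ?_⟩
      rcases hside u hu with h | h
      · exact ⟨y a₀, ⟨by linarith, by linarith⟩, ⟨by linarith, by linarith⟩⟩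
      · exact ⟨y b₀, ⟨by linarith, by linarith⟩, ⟨by linarith, by linarith⟩⟩
    · exact ⟨u, fun h => absurd h hex⟩
  choose f hf using key
  refine ⟨f '' {u ∈ S | ∃ v ∈ U, v = u ∨ G.Adj v u}, ?_, ?_, ?_⟩
  · rintro _ ⟨u, ⟨_, hu⟩, rfl⟩
    exact (hf u hu).1
  · exact (Set.ncard_image_le (Set.toFinite _)).trans
      (Set.ncard_le_ncard (fun u hu => hu.1) (Set.toFinite _))
  · intro v hv
    obtain ⟨u, huS, hvu⟩ : ∃ u ∈ S, v = u ∨ G.Adj v u := by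
      rcases hS v hv with h | ⟨u, h1, h2⟩
      · exact ⟨v, h, Or.inl rfl⟩
      · exact ⟨u, h1, Or.inr h2⟩
    have hex : ∃ v ∈ U, v = u ∨ G.Adj v u := ⟨v, hv, hvu⟩
    have hm : f u ∈ f '' {u ∈ S | ∃ v ∈ U, v = u ∨ G.Adj v u} := ⟨u, ⟨huS, hex⟩, rfl⟩
    rcases (hf u hex).2 v hv hvu with h | h
    · left
      rw [h]
      exact hm
    · exact Or.inr ⟨f u, hm, h⟩
end

section
/- For every positive integer m, the m-hypercube graph H_m has a dominating set D with |D|·(m + 1) ≤ 2^{m+1}; that is, the domination number of H_m is at most 2^{m+1}/(m+1). -/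
/-- For every positive integer `m`, the `m`-hypercube graph has a
dominating set `D` with `|D| * (m + 1) ≤ 2 ^ (m + 1)`. -/
theorem stmt_10
    (m : ℕ) (hm : 1 ≤ m)
    (H : SimpleGraph (Fin m → Bool))
    (hH : ∀ u v : Fin m → Bool, H.Adj u v ↔
      ∃ i : Fin m, u i ≠ v i ∧ ∀ j : Fin m, j ≠ i → u j = v j) :
    ∃ D : Set (Fin m → Bool),
      (∀ v : Fin m → Bool, v ∈ D ∨ ∃ u ∈ D, H.Adj v u) ∧
      D.ncard * (m + 1) ≤ 2 ^ (m + 1) := by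
  classical
  obtain ⟨k, hk1, hk2⟩ : ∃ k, 2 ^ k ≤ m + 1 ∧ m + 1 < 2 ^ (k + 1) :=
    ⟨Nat.log 2 (m + 1), Nat.pow_log_le_self 2 (by omega),
      Nat.lt_pow_succ_log_self (by norm_num) _⟩
  have hkm : k ≤ m := by
    have h1 : m + 1 ≤ 2 ^ m := Nat.lt_two_pow_self
    exact (Nat.pow_le_pow_iff_right (by norm_num : 1 < 2)).1 (hk1.trans h1)
  have hcard : Fintype.card (Fin k → ZMod 2) = 2 ^ k := by simp
  have hne : Nonempty ({x : Fin k → ZMod 2 // x ≠ 0} ↪ Fin m) := by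
    apply Function.Embedding.nonempty_of_card_le
    have : Fintype.card {x : Fin k → ZMod 2 // x ≠ 0} = 2 ^ k - 1 := by
      rw [Fintype.card_subtype_compl, hcard]
      simp
    rw [this, Fintype.card_fin]
    omega
  obtain ⟨e⟩ := hne
  obtain ⟨g, hg⟩ : ∃ g : Fin m → (Fin k → ZMod 2), ∀ x, x ≠ 0 → ∃ i, g i = x :=
    ⟨Function.extend e Subtype.val 0, fun x hx => ⟨e ⟨x, hx⟩, by
      rw [e.injective.extend_apply]⟩⟩
  have h2 : ∀ x : Fin k → ZMod 2, x + x = 0 := fun x => by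
    ext j
    exact CharTwo.add_self_eq_zero (x j)
  let s : (Fin m → Bool) → (Fin k → ZMod 2) := fun v => ∑ j, if v j then g j else 0
  have hs : ∀ v i, s (Function.update v i (!v i)) = s v + g i := by
    intro v i
    have h3 : g i = ∑ j, if j = i then g j else 0 := by simp
    rw [h3]
    simp only [s]
    rw [← Finset.sum_add_distrib]
    refine Finset.sum_congr rfl fun j _ => ?_
    by_cases hj : j = i
    · subst hj
      cases h : v j <;> simp [h2]
    · simp [hj]
  obtain ⟨c, hc⟩ := Fintype.exists_card_fiber_le_of_card_le_mul (f := s) (n := 2 ^ (m - k))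
    (by rw [hcard, ← pow_add, Nat.add_sub_cancel' hkm]; simp)
  refine ⟨{v | s v = c}, fun v => ?_, ?_⟩
  · by_cases hv : s v = c
    · exact Or.inl hv
    · right
      obtain ⟨i, hi⟩ := hg (c - s v) (sub_ne_zero.2 (Ne.symm hv))
      refine ⟨Function.update v i (!v i), ?_, (hH _ _).2 ⟨i, by simp, fun j hj => by simp [hj]⟩⟩
      show s _ = c
      rw [hs, hi]
      abel
  · have hn : Set.ncard {v | s v = c} ≤ 2 ^ (m - k) := by
      rw [← Set.ncard_coe_finset] at hc
      simpa using hc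
    calc _ ≤ 2 ^ (m - k) * 2 ^ (k + 1) := Nat.mul_le_mul hn hk2.le
      _ = 2 ^ (m + 1) := by rw [← pow_add]; congr 1; omega
end
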